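/- Let D ≥ 2. For each n ≥ 0 let S_n be the space of pairs (P, P̄) of homogeneous degree-n polynomial vector fields satisfying the system (S): ∂_μ P_ν = ∂_ν P̄_μ for all μ, ν and Σ_μ ∂^μ P_μ = Σ_μ ∂^μ P̄_μ, and let T_n = {(∇R, ∇R) : R a homogeneous polynomial of degree n+1} ⊆ S_n. Then dim_ℂ S_0/T_0 = D, dim_ℂ S_1/T_1 = D(D−1)/2, and S_n = T_n for all n ≥ 2. (These are the graded dimensions of the ghost-number-one cohomology of the zero-momentum extended closed-string complex, matching the generators of the Poincaré algebra: D translations and D(D−1)/2 Lorentz rotations.) -/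

import Mathlib

open MvPolynomial

/-- Pairs `(P, P̄)` of polynomial vector fields on `ℝ^{D-1,1}`. -/
abbrev PairVF (D : ℕ) :=
  (Fin D → MvPolynomial (Fin D) ℂ) × (Fin D → MvPolynomial (Fin D) ℂ)

/-- The partial derivative `∂_μ` on `ℂ[x^0, …, x^{D-1}]`, as a linear map. -/
noncomputable def pd (D : ℕ) (μ : Fin D) :
    MvPolynomial (Fin D) ℂ →ₗ[ℂ] MvPolynomial (Fin D) ℂ :=
  (pderiv μ).toLinearMap

/-- The raised-index derivative `∂^μ = η^{μμ} ∂_μ` for the Minkowski metric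
`η = diag(-1, 1, …, 1)` (no sum over `μ`). -/
noncomputable def pdU (D : ℕ) (μ : Fin D) :
    MvPolynomial (Fin D) ℂ →ₗ[ℂ] MvPolynomial (Fin D) ℂ :=
  (if (μ : ℕ) = 0 then (-1 : ℂ) else 1) • pd D μ

/-- The space of solutions `(P, P̄)` of the system (S):
`∂_μ P_ν = ∂_ν P̄_μ` for all `μ, ν`, and `Σ_μ ∂^μ P_μ = Σ_μ ∂^μ P̄_μ`. -/
noncomputable def solS (D : ℕ) : Submodule ℂ (PairVF D) where
  carrier := {p | (∀ μ ν, pd D μ (p.1 ν) = pd D ν (p.2 μ)) ∧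
    (∑ μ, pdU D μ (p.1 μ)) = ∑ μ, pdU D μ (p.2 μ)}
  add_mem' := by
    rintro a b ⟨ha1, ha2⟩ ⟨hb1, hb2⟩
    refine ⟨fun μ ν => ?_, ?_⟩
    · simp only [Prod.fst_add, Prod.snd_add, Pi.add_apply, map_add, ha1 μ ν, hb1 μ ν]
    · simp only [Prod.fst_add, Prod.snd_add, Pi.add_apply, map_add,
        Finset.sum_add_distrib, ha2, hb2]
  zero_mem' := by
    refine ⟨fun μ ν => ?_, ?_⟩ <;> simp
  smul_mem' := by
    rintro c a ⟨ha1, ha2⟩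
    refine ⟨fun μ ν => ?_, ?_⟩
    · simp only [Prod.smul_fst, Prod.smul_snd, Pi.smul_apply, map_smul, ha1 μ ν]
    · simp only [Prod.smul_fst, Prod.smul_snd, Pi.smul_apply, map_smul,
        ← Finset.smul_sum, ha2]

/-- Pairs of vector fields all of whose components are homogeneous of degree `n`. -/
noncomputable def homPairVF (D n : ℕ) : Submodule ℂ (PairVF D) :=
  (Submodule.pi Set.univ fun _ : Fin D => homogeneousSubmodule (Fin D) ℂ n).prod
  (Submodule.pi Set.univ fun _ : Fin D => homogeneousSubmodule (Fin D) ℂ n)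

/-- `S_n`: homogeneous degree-`n` solutions of the system (S). -/
noncomputable def solSn (D n : ℕ) : Submodule ℂ (PairVF D) :=
  solS D ⊓ homPairVF D n

/-- The gradient `R ↦ (∂_μ R)_μ` as a linear map. -/
noncomputable def grad (D : ℕ) :
    MvPolynomial (Fin D) ℂ →ₗ[ℂ] (Fin D → MvPolynomial (Fin D) ℂ) :=
  LinearMap.pi fun μ => pd D μ

/-- The map `R ↦ (∇R, ∇R)`. -/
noncomputable def gradPair (D : ℕ) : MvPolynomial (Fin D) ℂ →ₗ[ℂ] PairVF D :=
  (grad D).prod (grad D)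

/-- `T_n`: trivial solutions `(∇R, ∇R)` with `R` homogeneous of degree `n+1`. -/
noncomputable def trivTn (D n : ℕ) : Submodule ℂ (PairVF D) :=
  (homogeneousSubmodule (Fin D) ℂ (n + 1)).map (gradPair D)

/-!
The map `(P, P̄) ↦ P - P̄` identifies `S_n / T_n` with the degree-`n` solutions of Killing's
equation `∂_μ V_ν + ∂_ν V_μ = 0`. Indeed `∂_μ (P_ν - P̄_ν) = ∂_μ P_ν - ∂_ν P_μ` by (S), which is
antisymmetric; if `P = P̄`, then `P` is closed, hence a gradient by the Poincaré lemma; and a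
Killing field `V` is the image of `(V/2, -V/2)`. Killing fields of degree `0` are constants, those
of degree `1` are given by skew-symmetric matrices, and there are none of higher degree because
`∂_λ ∂_μ V_ν` is symmetric in `λ, μ` and antisymmetric in `μ, ν`.
-/

section Derivatives

variable {σ R : Type*}

theorem pderiv_pderiv_comm [CommSemiring R] (i j : σ) (φ : MvPolynomial σ R) :
    pderiv i (pderiv j φ) = pderiv j (pderiv i φ) := by
  rcases eq_or_ne i j with rfl | hij
  · rfl
  · ext m
    simp only [coeff_pderiv, Finsupp.add_apply, Finsupp.single_eq_of_ne hij,
      Finsupp.single_eq_of_ne hij.symm, add_zero, add_right_comm m (Finsupp.single i 1)]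
    ring

theorem eq_C_of_isHomogeneous_zero [CommSemiring R] {φ : MvPolynomial σ R}
    (hφ : φ.IsHomogeneous 0) : φ = C (constantCoeff φ) := by
  rw [constantCoeff_eq, ← homogeneousComponent_zero, homogeneousComponent_eq_self hφ]

theorem eq_zero_of_forall_pderiv_eq_zero [Finite σ] [CommSemiring R] [IsAddTorsionFree R] {n : ℕ}
    (hn : n ≠ 0) {φ : MvPolynomial σ R} (hφ : φ.IsHomogeneous n) (h : ∀ i, pderiv i φ = 0) :
    φ = 0 := by
  have := Fintype.ofFinite σ
  have euler : n • φ = 0 := by simp [← hφ.sum_X_mul_pderiv, h]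
  exact (smul_eq_zero.mp euler).resolve_left hn

theorem exists_pderiv_eq_of_closed [Finite σ] [CommSemiring R] {n : ℕ}
    (hn : IsUnit (n + 1 : R)) {P : σ → MvPolynomial σ R} (hP : ∀ i, (P i).IsHomogeneous n)
    (hclosed : ∀ i j, pderiv i (P j) = pderiv j (P i)) :
    ∃ φ : MvPolynomial σ R, φ.IsHomogeneous (n + 1) ∧ ∀ i, pderiv i φ = P i := by
  classical
  have := Fintype.ofFinite σ
  obtain ⟨u, hu⟩ := hn
  refine ⟨C (↑u⁻¹ : R) * ∑ j, X j * P j, .C_mul (.sum _ _ _ fun j _ => ?_) _, fun i => ?_⟩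
  · exact add_comm 1 n ▸ (isHomogeneous_X R j).mul (hP j)
  · have pderiv_radial : pderiv i (∑ j, X j * P j) = C (u : R) * P i := calc
      _ = ∑ j, X j * pderiv j (P i) + P i := by
        simp [pderiv_X, Pi.single_apply, Finset.sum_add_distrib, hclosed i]
      _ = C (u : R) * P i := by
        rw [(hP i).sum_X_mul_pderiv, hu, nsmul_eq_mul, C_add, C_1, map_natCast, add_one_mul]
    rw [pderiv_C_mul, pderiv_radial, ← mul_assoc, ← C_mul, u.inv_mul, C_1, one_mul]

end Derivatives

section LinearFields

open Matrix

variable {m n R : Type*} [Fintype n] [CommSemiring R]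

theorem pderiv_toMvPolynomial (A : Matrix m n R) (i : m) (j : n) :
    pderiv j (A.toMvPolynomial i) = C (A i j) := by
  classical
  simp [toMvPolynomial, ← C_mul_X_eq_monomial, pderiv_X, Pi.single_apply]

theorem toMvPolynomial_constantCoeff_pderiv {V : m → MvPolynomial n R}
    (hV : ∀ i, (V i).IsHomogeneous 1) :
    (Matrix.of fun i j => constantCoeff (pderiv j (V i))).toMvPolynomial = V := by
  funext i
  calc
    _ = ∑ j, X j * pderiv j (V i) := Finset.sum_congr rfl fun j _ => by
      rw [of_apply, ← C_mul_X_eq_monomial, ← eq_C_of_isHomogeneous_zero (hV i).pderiv, mul_comm]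
    _ = V i := by rw [(hV i).sum_X_mul_pderiv, one_smul]

end LinearFields

section SkewSymmetric

open LieAlgebra.Orthogonal

variable {ι R : Type*} [CommRing R]

theorem apply_swap_of_mem_so [Fintype ι] [DecidableEq ι] {A : Matrix ι ι R} (hA : A ∈ so ι R)
    (i j : ι) :
    A j i = -A i j :=
  congrFun₂ ((mem_so ι R A).mp hA) i j

/-- A skew-symmetric matrix amounts to its entries below the diagonal. -/
def soEquivLower [Fintype ι] [LinearOrder ι] (h2 : (2 : R) ∈ nonZeroDivisors R) :
    so ι R ≃ₗ[R] ((Σ i : ι, Set.Iio i) → R) where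
  toFun A x := A.1 x.1 x.2
  map_add' _ _ := rfl
  map_smul' _ _ := rfl
  invFun c := ⟨Matrix.of fun i j =>
      if h : j < i then c ⟨i, j, h⟩ else if h : i < j then -c ⟨j, i, h⟩ else 0, by
    rw [mem_so]
    ext i j
    rcases lt_trichotomy i j with h | rfl | h <;> simp [*, not_lt_of_gt]⟩
  left_inv A := by
    have diag_eq_zero (i : ι) : A.1 i i = 0 := by
      rw [← mul_right_mem_nonZeroDivisors_eq_zero_iff h2, mul_two, add_eq_zero_iff_eq_neg]
      exact apply_swap_of_mem_so A.2 i i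
    ext i j
    rcases lt_trichotomy i j with h | rfl | h
    · simp [h, not_lt_of_gt, apply_swap_of_mem_so A.2 i j]
    · simp [diag_eq_zero]
    · simp [h]
  right_inv c := by
    ext ⟨i, j, h⟩
    simp [Set.mem_Iio.mp h]

theorem finrank_so [Nontrivial R] (h2 : (2 : R) ∈ nonZeroDivisors R) (d : ℕ) :
    Module.finrank R (so (Fin d) R) = d * (d - 1) / 2 := by
  rw [(soEquivLower h2).finrank_eq, Module.finrank_fintype_fun_eq_card, Fintype.card_sigma]
  simp_rw [Fintype.card_Iio, Fin.card_Iio]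
  rw [Fin.sum_univ_eq_sum_range (fun i => i), Finset.sum_range_id]

end SkewSymmetric

section KillingFields

variable (σ R : Type*) [CommRing R]

/-- The homogeneous degree-`n` polynomial solutions `V` of Killing's equation
`∂_i V_j + ∂_j V_i = 0`. The index of `V` is lowered, so no (constant) metric enters. -/
noncomputable def killingField (n : ℕ) : Submodule R (σ → MvPolynomial σ R) where
  carrier := {V | (∀ i, (V i).IsHomogeneous n) ∧ ∀ i j, pderiv i (V j) = -pderiv j (V i)}
  add_mem' hV hW := ⟨fun i => (hV.1 i).add (hW.1 i), fun i j => by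
    simp only [Pi.add_apply, map_add, hV.2 i j, hW.2 i j, neg_add]⟩
  zero_mem' := ⟨fun _ => isHomogeneous_zero _ _ _, fun _ _ => by simp⟩
  smul_mem' c V hV := ⟨fun i => Submodule.smul_mem (homogeneousSubmodule σ R n) c (hV.1 i),
    fun i j => by simp only [Pi.smul_apply, Derivation.map_smul, hV.2 i j, smul_neg]⟩

/-- Translations: the Killing fields of degree `0` are the constant fields. -/
noncomputable def killingFieldZeroEquiv : killingField σ R 0 ≃ₗ[R] (σ → R) where
  toFun V i := constantCoeff (V.1 i)
  map_add' _ _ := by ext; simp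
  map_smul' _ _ := by ext; simp
  invFun c := ⟨fun i => C (c i), fun _ => isHomogeneous_C _ _, fun _ _ => by simp⟩
  left_inv V := by ext1; funext i; exact (eq_C_of_isHomogeneous_zero (V.2.1 i)).symm
  right_inv c := by ext; simp

/-- Infinitesimal rotations: the Killing fields of degree `1` are the linear fields
`V_i = ∑ j, A i j * X j` with `A` skew-symmetric. -/
noncomputable def killingFieldOneEquiv [Fintype σ] [DecidableEq σ] :
    killingField σ R 1 ≃ₗ[R] LieAlgebra.Orthogonal.so σ R where
  toFun V := ⟨Matrix.of fun i j => constantCoeff (pderiv j (V.1 i)), by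
    rw [LieAlgebra.Orthogonal.mem_so]
    ext i j
    simp [V.2.2 i j]⟩
  map_add' _ _ := by ext; simp
  map_smul' _ _ := by ext; simp
  invFun A := ⟨A.1.toMvPolynomial, A.1.toMvPolynomial_isHomogeneous, fun i j => by
    rw [pderiv_toMvPolynomial, pderiv_toMvPolynomial, apply_swap_of_mem_so A.2 i j, C_neg]⟩
  left_inv V := Subtype.ext (toMvPolynomial_constantCoeff_pderiv V.2.1)
  right_inv A := by
    ext i j
    simp [pderiv_toMvPolynomial]

variable {σ R}

theorem pderiv_pderiv_killingField [IsAddTorsionFree R] {n : ℕ} {V : σ → MvPolynomial σ R}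
    (hV : V ∈ killingField σ R n) (i j k : σ) : pderiv i (pderiv j (V k)) = 0 := by
  have swap_right (a b c : σ) : pderiv a (pderiv b (V c)) = -pderiv a (pderiv c (V b)) := by
    rw [hV.2 b c, map_neg]
  have eq_neg_self : pderiv i (pderiv j (V k)) = -pderiv i (pderiv j (V k)) := calc
    _ = -pderiv k (pderiv i (V j)) := by rw [swap_right, pderiv_pderiv_comm]
    _ = pderiv j (pderiv k (V i)) := by rw [swap_right, neg_neg, pderiv_pderiv_comm]
    _ = -pderiv i (pderiv j (V k)) := by rw [swap_right, pderiv_pderiv_comm]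
  have two_smul_eq_zero : 2 • pderiv i (pderiv j (V k)) = 0 := by
    rw [two_nsmul]
    exact add_eq_zero_iff_eq_neg.mpr eq_neg_self
  exact (smul_eq_zero.mp two_smul_eq_zero).resolve_left two_ne_zero

theorem killingField_eq_bot [Finite σ] [IsAddTorsionFree R] {n : ℕ} (hn : 2 ≤ n) :
    killingField σ R n = ⊥ := by
  refine (Submodule.eq_bot_iff _).mpr fun V hV => funext fun k => ?_
  have pderiv_eq_zero (j : σ) : pderiv j (V k) = 0 :=
    eq_zero_of_forall_pderiv_eq_zero (by lia) (hV.1 k).pderiv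
      fun i => pderiv_pderiv_killingField hV i j k
  exact eq_zero_of_forall_pderiv_eq_zero (by lia) (hV.1 k) pderiv_eq_zero

end KillingFields

section Cohomology

variable {D n : ℕ} {p : PairVF D}

theorem mem_homPairVF :
    p ∈ homPairVF D n ↔ (∀ μ, (p.1 μ).IsHomogeneous n) ∧ ∀ μ, (p.2 μ).IsHomogeneous n := by
  simp [homPairVF, Submodule.mem_prod, Submodule.mem_pi, mem_homogeneousSubmodule]

theorem pderiv_fst_eq_pderiv_snd (hp : p ∈ solSn D n) (μ ν : Fin D) :
    pderiv μ (p.1 ν) = pderiv ν (p.2 μ) :=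
  hp.1.1 μ ν

theorem trivTn_le_solSn : trivTn D n ≤ solSn D n := by
  rintro _ ⟨R, hR, rfl⟩
  have hgrad (μ : Fin D) : (pderiv μ R).IsHomogeneous n := IsHomogeneous.pderiv hR
  exact ⟨⟨fun μ ν => pderiv_pderiv_comm μ ν R, rfl⟩, mem_homPairVF.mpr ⟨hgrad, hgrad⟩⟩

theorem mem_trivTn_iff_fst_eq_snd (hp : p ∈ solSn D n) : p ∈ trivTn D n ↔ p.1 = p.2 := by
  refine ⟨by rintro ⟨R, -, rfl⟩; rfl, fun heq => ?_⟩
  have hclosed (μ ν : Fin D) : pderiv μ (p.1 ν) = pderiv ν (p.1 μ) := by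
    rw [pderiv_fst_eq_pderiv_snd hp, heq]
  obtain ⟨R, hR, hgrad⟩ := exists_pderiv_eq_of_closed (Nat.cast_add_one_ne_zero n).isUnit
    (mem_homPairVF.mp hp.2).1 hclosed
  exact ⟨R, hR, Prod.ext (funext hgrad) ((funext hgrad).trans heq)⟩

theorem fst_sub_snd_mem_killingField (hp : p ∈ solSn D n) :
    p.1 - p.2 ∈ killingField (Fin D) ℂ n := by
  obtain ⟨hfst, hsnd⟩ := mem_homPairVF.mp hp.2
  refine ⟨fun μ => (hfst μ).sub (hsnd μ), fun μ ν => ?_⟩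
  simp only [Pi.sub_apply, map_sub, pderiv_fst_eq_pderiv_snd hp, neg_sub]

theorem mk_neg_mem_solSn {V : Fin D → MvPolynomial (Fin D) ℂ}
    (hV : V ∈ killingField (Fin D) ℂ n) : (V, -V) ∈ solSn D n := by
  have pderiv_swap (μ ν : Fin D) : pd D μ (V ν) = pd D ν (-V μ) :=
    (hV.2 μ ν).trans (map_neg (pderiv ν) (V μ)).symm
  refine ⟨⟨pderiv_swap, Finset.sum_congr rfl fun μ _ => ?_⟩,
    mem_homPairVF.mpr ⟨hV.1, fun μ => (hV.1 μ).neg⟩⟩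
  simp only [pdU, LinearMap.smul_apply, Pi.neg_apply, pderiv_swap μ μ]

variable (D n)

/-- The map `(P, P̄) ↦ P - P̄` from solutions of (S) to Killing fields. -/
noncomputable def solToKilling : solSn D n →ₗ[ℂ] killingField (Fin D) ℂ n :=
  ((LinearMap.fst ℂ _ _ - LinearMap.snd ℂ _ _) ∘ₗ (solSn D n).subtype).codRestrict _
    fun p => fst_sub_snd_mem_killingField p.2

theorem ker_solToKilling :
    LinearMap.ker (solToKilling D n) = (trivTn D n).comap (solSn D n).subtype := by
  ext p
  rw [Submodule.mem_comap, Submodule.subtype_apply, mem_trivTn_iff_fst_eq_snd p.2, ← sub_eq_zero]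
  exact Subtype.ext_iff

theorem solToKilling_surjective : Function.Surjective (solToKilling D n) := by
  intro V
  refine ⟨(2⁻¹ : ℂ) • ⟨_, mk_neg_mem_solSn V.2⟩, Subtype.ext ?_⟩
  change (2⁻¹ : ℂ) • V.1 - (2⁻¹ : ℂ) • -V.1 = V.1
  module

/-- The degree-`n` cohomology `S_n / T_n` is the space of degree-`n` Killing fields. -/
noncomputable def cohomologyEquivKilling :
    (solSn D n ⧸ (trivTn D n).comap (solSn D n).subtype) ≃ₗ[ℂ] killingField (Fin D) ℂ n :=
  (Submodule.quotEquivOfEq _ _ (ker_solToKilling D n).symm).trans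
    ((solToKilling D n).quotKerEquivOfSurjective (solToKilling_surjective D n))

end Cohomology

/-- Graded dimensions of the ghost number one cohomology of the zero-momentum extended
closed-string complex: `dim S₀/T₀ = D` (translations), `dim S₁/T₁ = D(D-1)/2` (Lorentz
rotations), and `S_n = T_n` for `n ≥ 2`. -/
theorem ghost_number_one_graded_dimensions (D : ℕ) (hD : 2 ≤ D) :
    Module.finrank ℂ (solSn D 0 ⧸ (trivTn D 0).comap (solSn D 0).subtype) = D ∧
    Module.finrank ℂ (solSn D 1 ⧸ (trivTn D 1).comap (solSn D 1).subtype)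
      = D * (D - 1) / 2 ∧
    ∀ n : ℕ, 2 ≤ n → solSn D n = trivTn D n := by
  refine ⟨?_, ?_, fun n hn => le_antisymm (fun p hp => ?_) trivTn_le_solSn⟩
  · rw [(cohomologyEquivKilling D 0).finrank_eq, (killingFieldZeroEquiv (Fin D) ℂ).finrank_eq,
      Module.finrank_fin_fun]
  · rw [(cohomologyEquivKilling D 1).finrank_eq, (killingFieldOneEquiv (Fin D) ℂ).finrank_eq]
    exact finrank_so (mem_nonZeroDivisors_of_ne_zero two_ne_zero) D
  · have hker : p.1 - p.2 = 0 := by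
      simpa [killingField_eq_bot hn] using fst_sub_snd_mem_killingField hp
    exact (mem_trivTn_iff_fst_eq_snd hp).mpr (sub_eq_zero.mp hker)
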